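/- (Deleting a cross-cut) Let r ≥ 3 and let H be an r-graph embeddable in a 1-reducible r-tree T (with H a subgraph of T). Let S be a cross-cut of H. Then the hypergraph H − S, whose edges are the sets E ∖ S for E an edge of H (each an (r−1)-set), is embeddable in an (r−1)-tree whose vertex set equals the vertex set of H − S. -/

import Mathlib

/-!
Suppose that the `r`-tree `T` is `s`-reducible and that `S` meets every edge of `H` in exactly `s`
vertices (a cross-cut is the case `s = 1`), and put `k = r - s`. Let `V` be the vertex set of
`H - S`. Intersecting the edges of a tree ordering of `T` with `V` preserves the tree ordering.
Every trace `E ∩ V` has at most `k` vertices: if `E ∈ H`, the vertices of `E` in `S` are lost and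
the trace is `E \ S`; if `E ∉ H`, its degree-one vertices, at least `s` of them, are lost because
they lie in no edge of `H`.

It remains to complete a tree-ordered family of sets of size at most `k`, covering at least `k`
vertices, to a `k`-tree on the same vertices in which every member of the family is contained in
an edge; members of size `k` are then themselves edges. Proceed by induction on the number of
sets. If the sets before the last one cover more than `k` vertices, the last set is enlarged by
vertices of an edge containing its parent, and appended. Otherwise two edges suffice: one
containing all the vertices covered so far and one containing the last set.
-/

open Finset
open scoped Classical

noncomputable section

variable {α β : Type*}

/-- The vertex set of a hypergraph given by its finite edge set. -/
def hverts [DecidableEq α] (H : Finset (Finset α)) : Finset α := H.sup id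

/-- `E 0, E 1, …, E (m-1)` is a tree-defining ordering: every edge after the first
has a parent among the earlier edges containing its intersection with the union of
all earlier edges. -/
def IsTreeOrder {m : ℕ} [DecidableEq α] (E : Fin m → Finset α) : Prop :=
  ∀ i : Fin m, 0 < i.1 → ∃ j : Fin m, j < i ∧ E i ∩ (Finset.Iio i).sup E ⊆ E j

/-- A tight tree-defining ordering for an `r`-uniform hypergraph. -/
def IsTightTreeOrder {m : ℕ} [DecidableEq α] (r : ℕ) (E : Fin m → Finset α) : Prop :=
  ∀ i : Fin m, 0 < i.1 → ∃ j : Fin m, j < i ∧ E i ∩ (Finset.Iio i).sup E ⊆ E j ∧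
    (E i ∩ E j).card = r - 1

/-- `H` is an `r`-tree: its edges admit a tree-defining ordering (with multiplicities
allowed in the ordering), and all edges have `r` vertices. -/
def IsRTree [DecidableEq α] (r : ℕ) (H : Finset (Finset α)) : Prop :=
  ∃ (m : ℕ) (E : Fin m → Finset α),
    H = Finset.image E Finset.univ ∧ IsTreeOrder E ∧ ∀ i, (E i).card = r

/-- `H` is a tight `r`-tree. -/
def IsTightRTree [DecidableEq α] (r : ℕ) (H : Finset (Finset α)) : Prop :=
  ∃ (m : ℕ) (E : Fin m → Finset α),
    H = Finset.image E Finset.univ ∧ IsTightTreeOrder r E ∧ ∀ i, (E i).card = r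

/-- The degree of a vertex: the number of edges containing it. -/
def hdeg [DecidableEq α] (H : Finset (Finset α)) (x : α) : ℕ :=
  (H.filter (fun E => x ∈ E)).card

/-- `H` is `k`-reducible: every edge contains at least `k` vertices of degree 1. -/
def Reducible [DecidableEq α] (k : ℕ) (H : Finset (Finset α)) : Prop :=
  ∀ E ∈ H, k ≤ (E.filter (fun x => hdeg H x = 1)).card

/-- `S` is a cross-cut of `H`: it meets every edge in exactly one vertex. -/
def IsCrossCut [DecidableEq α] (H : Finset (Finset α)) (S : Finset α) : Prop :=
  ∀ E ∈ H, (E ∩ S).card = 1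

/-- The cross-cut number: minimum size of a cross-cut. -/
def crossCutNum [DecidableEq α] (H : Finset (Finset α)) : ℕ :=
  sInf {k | ∃ S : Finset α, IsCrossCut H S ∧ S.card = k}

/-- `S` is a vertex cover of `H`. -/
def IsVertexCover [DecidableEq α] (H : Finset (Finset α)) (S : Finset α) : Prop :=
  ∀ E ∈ H, (E ∩ S).Nonempty

/-- The vertex cover number: minimum size of a vertex cover. -/
def coverNum [DecidableEq α] (H : Finset (Finset α)) : ℕ :=
  sInf {k | ∃ S : Finset α, IsVertexCover H S ∧ S.card = k}

/-- `G` contains a copy of `H`, i.e. `H` is embeddable in `G`. -/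
def ContainsCopy [DecidableEq α] [DecidableEq β] (G : Finset (Finset β))
    (H : Finset (Finset α)) : Prop :=
  ∃ f : α → β, Set.InjOn f ↑(H.sup id) ∧ ∀ E ∈ H, E.image f ∈ G

/-- The Turán number `ex(n, H)`: the maximum size of an `r`-uniform family on `[n]`
containing no copy of `H`. -/
def exNum [DecidableEq α] (n r : ℕ) (H : Finset (Finset α)) : ℕ :=
  sSup {N | ∃ F : Finset (Finset (Fin n)), (∀ E ∈ F, E.card = r) ∧
    ¬ ContainsCopy F H ∧ F.card = N}

section

variable [DecidableEq α] {k m r s : ℕ} {G H T : Finset (Finset α)} {A B L S V : Finset α}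
  {E : Fin m → Finset α}

lemma subset_sup_id_of_mem (hA : A ∈ G) : A ⊆ G.sup id :=
  le_sup (f := id) hA

lemma univ_sup_snoc (E : Fin m → Finset α) (A : Finset α) :
    univ.sup (Fin.snoc E A : Fin (m + 1) → Finset α) = A ∪ univ.sup E := by
  simp [Fin.univ_castSuccEmb, sup_map, Function.comp_def]

lemma isTreeOrder_snoc_iff :
    IsTreeOrder (Fin.snoc E A : Fin (m + 1) → Finset α) ↔
      IsTreeOrder E ∧ (0 < m → ∃ j, A ∩ univ.sup E ⊆ E j) := by
  have not_last_lt (i : Fin m) : ¬ Fin.last m < i.castSucc := (Fin.castSucc_lt_last i).not_gt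
  simp only [IsTreeOrder, Fin.forall_fin_succ', Fin.exists_fin_succ', Fin.Iio_last_eq_map,
    Fin.Iio_castSucc, sup_map, Function.comp_def, Fin.castSucc_lt_last, Fin.snoc_castSucc,
    Fin.snoc_last, Fin.coe_castSuccEmb, Fin.castSucc_lt_castSucc_iff, Fin.val_castSucc,
    Fin.val_last, not_last_lt, lt_irrefl, true_and, false_and, or_false]

lemma IsTreeOrder.inter_right (hE : IsTreeOrder E) (V : Finset α) :
    IsTreeOrder fun i => E i ∩ V := by
  intro i hi
  obtain ⟨j, hji, hsub⟩ := hE i hi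
  refine ⟨j, hji, ?_⟩
  have hsup : ((Iio i).sup fun l => E l ∩ V) = (Iio i).sup E ∩ V :=
    (sup_inf_distrib_right ..).symm
  rw [hsup, ← inter_inter_distrib_right]
  exact inter_subset_inter_right hsub

lemma IsRTree.card_eq (hG : IsRTree k G) (hA : A ∈ G) : #A = k := by
  obtain ⟨m, E, rfl, -, hcard⟩ := hG
  obtain ⟨i, -, rfl⟩ := mem_image.1 hA
  exact hcard i

lemma isRTree_empty : IsRTree k (∅ : Finset (Finset α)) :=
  ⟨0, Fin.elim0, by simp, fun i => i.elim0, fun i => i.elim0⟩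

lemma IsRTree.insert_edge (hG : IsRTree k G) (hA : #A = k)
    (hparent : G.Nonempty → ∃ B ∈ G, A ∩ G.sup id ⊆ B) : IsRTree k (insert A G) := by
  obtain ⟨m, E, rfl, hE, hcard⟩ := hG
  refine ⟨m + 1, Fin.snoc E A, ?_, isTreeOrder_snoc_iff.2 ⟨hE, fun hm => ?_⟩, ?_⟩
  · ext B
    simp [Fin.exists_fin_succ', or_comm, eq_comm]
  · obtain ⟨B, hB, hAB⟩ := hparent ⟨E ⟨0, hm⟩, mem_image_of_mem E (mem_univ _)⟩
    obtain ⟨j, -, rfl⟩ := mem_image.1 hB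
    exact ⟨j, by simpa only [sup_image, Function.id_comp] using hAB⟩
  · simpa [Fin.forall_fin_succ'] using ⟨hcard, hA⟩

lemma isRTree_pair (hA : #A = k) (hB : #B = k) : IsRTree k {A, B} := by
  have hsingle : IsRTree k {B} := isRTree_empty.insert_edge hB fun h => absurd h not_nonempty_empty
  exact hsingle.insert_edge hA fun _ => ⟨B, mem_singleton_self B, by simp⟩

lemma exists_isRTree_pair_of_card_le (hA : #A ≤ k) (hB : #B ≤ k) (hAB : k ≤ #(A ∪ B)) :
    ∃ A' B', A ⊆ A' ∧ B ⊆ B' ∧ A' ∪ B' = A ∪ B ∧ IsRTree k {A', B'} := by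
  obtain ⟨A', hAA', hA'AB, hA'⟩ := exists_subsuperset_card_eq subset_union_left hA hAB
  obtain ⟨B', hBB', hB'AB, hB'⟩ := exists_subsuperset_card_eq subset_union_right hB hAB
  exact ⟨A', B', hAA', hBB',
    (union_subset hA'AB hB'AB).antisymm (union_subset_union hAA' hBB'), isRTree_pair hA' hB'⟩

lemma IsRTree.exists_insert_superset (hG : IsRTree k G) (hL : #L ≤ k) (hB : B ∈ G)
    (hLB : L ∩ G.sup id ⊆ B) :
    ∃ A, L ⊆ A ∧ A ∪ G.sup id = L ∪ G.sup id ∧ IsRTree k (insert A G) := by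
  obtain ⟨A, hLA, hALB, hA⟩ := exists_subsuperset_card_eq subset_union_left hL
    ((hG.card_eq hB).ge.trans (card_le_card (subset_union_right (s₁ := L))))
  have hBG : B ⊆ G.sup id := subset_sup_id_of_mem hB
  refine ⟨A, hLA, ?_, hG.insert_edge hA fun _ => ⟨B, hB, ?_⟩⟩
  · grind
  · calc A ∩ G.sup id ⊆ (L ∪ B) ∩ G.sup id := inter_subset_inter_right hALB
      _ = L ∩ G.sup id ∪ B ∩ G.sup id := union_inter_distrib_right ..
      _ ⊆ B := union_subset hLB inter_subset_left

/- Assuming that many vertices are covered, rather than that some set has size `k`, lets the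
induction run without changing the root. -/
lemma IsTreeOrder.exists_isRTree (hE : IsTreeOrder E) (hcard : ∀ i, #(E i) ≤ k)
    (hk : k ≤ #(univ.sup E)) :
    ∃ G, IsRTree k G ∧ G.sup id = univ.sup E ∧ ∀ i, ∃ A ∈ G, E i ⊆ A := by
  induction E using Fin.snocInduction with
  | elim0 => exact ⟨∅, isRTree_empty, by simp, fun i => i.elim0⟩
  | @snoc n E L ih =>
    obtain ⟨hE, hparent⟩ := isTreeOrder_snoc_iff.1 hE
    simp only [Fin.forall_fin_succ', Fin.snoc_castSucc, Fin.snoc_last] at hcard ⊢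
    obtain ⟨hcard, hL⟩ := hcard
    rw [univ_sup_snoc] at hk ⊢
    rcases le_or_gt #(univ.sup E) k with hsmall | hlarge
    · obtain ⟨A, B, hLA, hEB, hAB, htree⟩ := exists_isRTree_pair_of_card_le hL hsmall hk
      exact ⟨{A, B}, htree, by simpa using hAB,
        fun i => ⟨B, by simp, (le_sup (mem_univ i)).trans hEB⟩, A, by simp, hLA⟩
    · obtain ⟨G, hG, hGE, hdom⟩ := ih hE hcard hlarge.le
      have hn : 0 < n := Nat.pos_of_ne_zero (by rintro rfl; simp at hlarge)
      obtain ⟨j, hLj⟩ := hparent hn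
      obtain ⟨B, hB, hjB⟩ := hdom j
      obtain ⟨A, hLA, hAG, htree⟩ :=
        hG.exists_insert_superset hL hB (hGE ▸ hLj.trans hjB)
      refine ⟨insert A G, htree, ?_, fun i => ?_, A, mem_insert_self A G, hLA⟩
      · rw [sup_insert, id_eq, sup_eq_union, hAG, hGE]
      · obtain ⟨C, hC, hiC⟩ := hdom i
        exact ⟨C, mem_insert_of_mem hC, hiC⟩

lemma IsRTree.exists_isRTree_inter_subset (hT : IsRTree r T) (hVT : V ⊆ T.sup id)
    (htrace : ∀ A ∈ T, #(A ∩ V) ≤ k) (hV : k ≤ #V) :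
    ∃ G, IsRTree k G ∧ G.sup id = V ∧ ∀ A ∈ T, ∃ B ∈ G, A ∩ V ⊆ B := by
  obtain ⟨m, E, rfl, hE, -⟩ := hT
  have hsup : univ.sup (fun i => E i ∩ V) = V := by
    rw [sup_image, Function.id_comp] at hVT
    exact (sup_inf_distrib_right ..).symm.trans (inf_eq_right.2 hVT)
  simp only [mem_image, mem_univ, true_and, forall_exists_index, forall_apply_eq_imp_iff]
    at htrace ⊢
  simpa only [hsup] using (hE.inter_right V).exists_isRTree htrace (hsup.symm ▸ hV)

lemma Reducible.card_inter_sup_add_le (hT : Reducible s T) (hHT : H ⊆ T) (hAT : A ∈ T)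
    (hAH : A ∉ H) : #(A ∩ H.sup id) + s ≤ #A := by
  have hprivate : A.filter (fun x => hdeg T x = 1) ⊆ A \ H.sup id := by
    intro x hx
    obtain ⟨hxA, hdeg⟩ := mem_filter.1 hx
    refine mem_sdiff.2 ⟨hxA, fun hxH => hAH ?_⟩
    obtain ⟨B, hBH, hxB⟩ := mem_sup.1 hxH
    have hBA : B = A := card_le_one.1 hdeg.le B (mem_filter.2 ⟨hHT hBH, hxB⟩)
      A (mem_filter.2 ⟨hAT, hxA⟩)
    exact hBA ▸ hBH
  calc #(A ∩ H.sup id) + s ≤ #(A ∩ H.sup id) + #(A \ H.sup id) :=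
        Nat.add_le_add_left ((hT A hAT).trans (card_le_card hprivate)) _
    _ = #A := card_inter_add_card_sdiff ..

lemma sup_image_sdiff (H : Finset (Finset α)) (S : Finset α) :
    (H.image (fun A => A \ S)).sup id = H.sup id \ S := by
  rw [sup_image, Function.id_comp]
  exact sup_sdiff_right H id S

lemma inter_sup_sdiff (S : Finset α) (hA : A ∈ H) : A ∩ (H.sup id \ S) = A \ S := by
  rw [← inter_sdiff_assoc, inter_eq_left.2 (subset_sup_id_of_mem hA)]

lemma card_sdiff_of_card_inter (hA : #A = k + s) (hAS : #(A ∩ S) = s) : #(A \ S) = k := by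
  have := card_sdiff_add_card_inter A S
  omega

lemma Reducible.card_inter_sup_sdiff_le (hT : Reducible s T) (hHT : H ⊆ T)
    (hS : ∀ B ∈ H, #(B ∩ S) = s) (hAT : A ∈ T) (hA : #A = k + s) :
    #(A ∩ (H.sup id \ S)) ≤ k := by
  by_cases hAH : A ∈ H
  · rw [inter_sup_sdiff S hAH, card_sdiff_of_card_inter hA (hS A hAH)]
  · have hle : #(A ∩ H.sup id) ≤ k := by
      have := hT.card_inter_sup_add_le hHT hAT hAH
      omega
    exact (card_le_card (inter_subset_inter_left sdiff_subset)).trans hle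

theorem deleting_a_crosscut_general (hT : IsRTree (k + s) T)
    (hred : Reducible s T) (hHT : H ⊆ T) (hS : ∀ A ∈ H, #(A ∩ S) = s) :
    ∃ G, IsRTree k G ∧ G.sup id = (H.image (fun A => A \ S)).sup id ∧
      ContainsCopy G (H.image (fun A => A \ S)) := by
  rcases H.eq_empty_or_nonempty with rfl | ⟨A₀, hA₀⟩
  · exact ⟨∅, isRTree_empty, by simp, id, by simp, by simp⟩
  rw [sup_image_sdiff]
  have hcard : ∀ A ∈ H, #(A \ S) = k := fun A hA =>
    card_sdiff_of_card_inter (hT.card_eq (hHT hA)) (hS A hA)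
  have hV : k ≤ #(H.sup id \ S) :=
    (hcard A₀ hA₀).ge.trans
      (card_le_card (sdiff_subset_sdiff (subset_sup_id_of_mem hA₀) Subset.rfl))
  have htrace : ∀ A ∈ T, #(A ∩ (H.sup id \ S)) ≤ k := fun A hA =>
    hred.card_inter_sup_sdiff_le hHT hS hA (hT.card_eq hA)
  obtain ⟨G, hG, hGV, hdom⟩ :=
    hT.exists_isRTree_inter_subset (sdiff_subset.trans (sup_mono hHT)) htrace hV
  refine ⟨G, hG, hGV, id, Function.injective_id.injOn, forall_mem_image.2 fun A hA => ?_⟩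
  obtain ⟨B, hB, hAB⟩ := hdom A (hHT hA)
  rw [inter_sup_sdiff S hA] at hAB
  have hAB_eq : A \ S = B := eq_of_subset_of_card_le hAB (by rw [hcard A hA, hG.card_eq hB])
  rwa [image_id, hAB_eq]

end

/-- Deleting a cross-cut: if `H` is a subgraph of a `1`-reducible `r`-tree (`r ≥ 3`) and
`S` is a cross-cut of `H`, then `H - S` is embeddable in an `(r-1)`-tree whose vertex set
equals the vertex set of `H - S`. -/
theorem deleting_a_crosscut {α : Type*} [DecidableEq α]
    (r : ℕ) (hr : 3 ≤ r)
    (T H : Finset (Finset α)) (hT : IsRTree r T) (hred : Reducible 1 T) (hHT : H ⊆ T)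
    (S : Finset α) (hS : IsCrossCut H S) :
    ∃ G : Finset (Finset α), IsRTree (r - 1) G ∧
      G.sup id = (H.image (fun A => A \ S)).sup id ∧
      ContainsCopy G (H.image (fun A => A \ S)) := by
  obtain ⟨k, rfl⟩ : ∃ k, r = k + 1 := ⟨r - 1, by omega⟩
  exact deleting_a_crosscut_general hT hred hHT hS

end
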